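/- Let A and B be nondegenerate INR-sets of dimension p on X = {x_1, …, x_n}, and let w_1, …, w_n be weights with w_j ≥ 0 and Σ_{j=1}^n w_j = 1. Then the weighted Dice similarity measure satisfies: (1) 0 ≤ W(A,B)_D ≤ 1; (2) W(A,B)_D = W(B,A)_D; (3) if for every j and i the interval membership values of A and B coincide, then W(A,B)_D = 1. -/

import Mathlib

open Finset

noncomputable def weightedDiceINR (n p : ℕ) (w : Fin n → ℝ)
    (tAL tAU iAL iAU fAL fAU tBL tBU iBL iBU fBL fBU : Fin p → Fin n → ℝ) : ℝ :=
  ∑ j : Fin n, w j * ((1 / (p : ℝ)) * ∑ i : Fin p,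
    (2 * (tAL i j * tBL i j + tAU i j * tBU i j + iAL i j * iBL i j
        + iAU i j * iBU i j + fAL i j * fBL i j + fAU i j * fBU i j)) /
      ((tAL i j ^ 2 + tAU i j ^ 2 + iAL i j ^ 2 + iAU i j ^ 2
        + fAL i j ^ 2 + fAU i j ^ 2)
      + (tBL i j ^ 2 + tBU i j ^ 2 + iBL i j ^ 2 + iBU i j ^ 2
        + fBL i j ^ 2 + fBU i j ^ 2)))

/-!
The Dice coefficient `2⟪a, b⟫ / (‖a‖² + ‖b‖²)` of two vectors is at most `1` because
`0 ≤ ‖a - b‖²`, and it equals `1` when `a = b ≠ 0`. The similarity measure is a convex combination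
of Dice coefficients, where the six interval endpoints form a vector of `ℝ⁶`.
-/

open scoped BigOperators RealInnerProductSpace

section DiceCoefficient

variable {E : Type*} [NormedAddCommGroup E] [InnerProductSpace ℝ E]

/-- The Dice similarity coefficient of two vectors of a real inner product space; division by zero
makes it `0` at `a = b = 0`. -/
noncomputable def diceCoeff (a b : E) : ℝ :=
  2 * ⟪a, b⟫ / (‖a‖ ^ 2 + ‖b‖ ^ 2)

lemma diceCoeff_comm (a b : E) : diceCoeff a b = diceCoeff b a := by
  rw [diceCoeff, diceCoeff, real_inner_comm, add_comm]

lemma diceCoeff_nonneg {a b : E} (h : 0 ≤ ⟪a, b⟫) : 0 ≤ diceCoeff a b := by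
  unfold diceCoeff
  positivity

lemma diceCoeff_le_one (a b : E) : diceCoeff a b ≤ 1 := by
  have two_inner_le : 2 * ⟪a, b⟫ ≤ ‖a‖ ^ 2 + ‖b‖ ^ 2 := by
    linarith [norm_sub_sq_real a b, sq_nonneg ‖a - b‖]
  exact div_le_one_of_le₀ two_inner_le (by positivity)

lemma diceCoeff_self {a : E} (ha : a ≠ 0) : diceCoeff a a = 1 := by
  rw [diceCoeff, real_inner_self_eq_norm_sq, ← two_mul]
  exact div_self (by positivity)

end DiceCoefficient

section WeightedDice

variable {E : Type*} [NormedAddCommGroup E] [InnerProductSpace ℝ E]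
  {I X : Type*} [Fintype I] [Fintype X] {w : X → ℝ} {A B : I → X → E}

/-- The weighted Dice similarity of two families of vectors: the Dice coefficients are averaged
uniformly over the components `i : I`, then with weights `w` over the points `j : X`. -/
noncomputable def weightedDice (w : X → ℝ) (A B : I → X → E) : ℝ :=
  ∑ j, w j * 𝔼 i, diceCoeff (A i j) (B i j)

lemma weightedDice_comm (w : X → ℝ) (A B : I → X → E) :
    weightedDice w A B = weightedDice w B A := by
  simp only [weightedDice, diceCoeff_comm]

lemma weightedDice_nonneg (hw : ∀ j, 0 ≤ w j) (hAB : ∀ i j, 0 ≤ ⟪A i j, B i j⟫) :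
    0 ≤ weightedDice w A B :=
  sum_nonneg fun j _ ↦ mul_nonneg (hw j) (expect_nonneg fun i _ ↦ diceCoeff_nonneg (hAB i j))

variable [Nonempty I]

lemma weightedDice_le_one (hw : ∀ j, 0 ≤ w j) (hw1 : ∑ j, w j = 1) (A B : I → X → E) :
    weightedDice w A B ≤ 1 :=
  calc weightedDice w A B
      ≤ ∑ j, w j * 1 := sum_le_sum fun j _ ↦ mul_le_mul_of_nonneg_left
        (expect_le univ_nonempty fun i _ ↦ diceCoeff_le_one (A i j) (B i j)) (hw j)
    _ = 1 := by simp only [mul_one, hw1]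

lemma weightedDice_self (hw1 : ∑ j, w j = 1) (hA : ∀ i j, A i j ≠ 0) :
    weightedDice w A A = 1 := by
  simp only [weightedDice, diceCoeff_self (hA _ _), Fintype.expect_const, mul_one, hw1]

theorem stmt_10_general (hw : ∀ j, 0 ≤ w j) (hw1 : ∑ j, w j = 1)
    (hinner : ∀ i j, 0 ≤ ⟪A i j, B i j⟫) (hnd : ∀ i j, ¬(A i j = 0 ∧ B i j = 0)) :
    (0 ≤ weightedDice w A B ∧ weightedDice w A B ≤ 1) ∧
      weightedDice w A B = weightedDice w B A ∧
      ((∀ i j, A i j = B i j) → weightedDice w A B = 1) := by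
  refine ⟨⟨weightedDice_nonneg hw hinner, weightedDice_le_one hw hw1 A B⟩,
    weightedDice_comm w A B, fun hAB ↦ ?_⟩
  obtain rfl : A = B := funext₂ hAB
  exact weightedDice_self hw1 fun i j h ↦ hnd i j ⟨h, h⟩

end WeightedDice

lemma inner_nonneg_of_forall_nonneg {ι : Type*} [Fintype ι] {a b : EuclideanSpace ℝ ι}
    (ha : ∀ k, 0 ≤ a k) (hb : ∀ k, 0 ≤ b k) : 0 ≤ ⟪a, b⟫ := by
  rw [PiLp.inner_apply]
  exact sum_nonneg fun k _ ↦ mul_nonneg (hb k) (ha k)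

section EndpointVector

/-- The endpoints of the truth, indeterminacy and falsity intervals as a vector of Euclidean space,
so that `N` and `S` in the Dice measure become inner products and squared norms. -/
noncomputable def endpointVector (tL tU iL iU fL fU : ℝ) : EuclideanSpace ℝ (Fin 6) :=
  !₂[tL, tU, iL, iU, fL, fU]

variable {tL tU iL iU fL fU tL' tU' iL' iU' fL' fU' : ℝ}

lemma forall_endpointVector_mem_iff {s : Set ℝ} :
    (∀ k, endpointVector tL tU iL iU fL fU k ∈ s) ↔
      tL ∈ s ∧ tU ∈ s ∧ iL ∈ s ∧ iU ∈ s ∧ fL ∈ s ∧ fU ∈ s := by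
  simp [endpointVector, Fin.forall_fin_succ]

lemma endpointVector_eq_zero_iff :
    endpointVector tL tU iL iU fL fU = 0 ↔
      tL = 0 ∧ tU = 0 ∧ iL = 0 ∧ iU = 0 ∧ fL = 0 ∧ fU = 0 := by
  simp [endpointVector]

lemma endpointVector_inj :
    endpointVector tL tU iL iU fL fU = endpointVector tL' tU' iL' iU' fL' fU' ↔
      tL = tL' ∧ tU = tU' ∧ iL = iL' ∧ iU = iU' ∧ fL = fL' ∧ fU = fU' := by
  simp [endpointVector]

lemma inner_endpointVector :
    ⟪endpointVector tL tU iL iU fL fU, endpointVector tL' tU' iL' iU' fL' fU'⟫ =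
      tL * tL' + tU * tU' + iL * iL' + iU * iU' + fL * fL' + fU * fU' := by
  simp [endpointVector, PiLp.inner_apply, Fin.sum_univ_six, mul_comm]

lemma norm_endpointVector_sq :
    ‖endpointVector tL tU iL iU fL fU‖ ^ 2 =
      tL ^ 2 + tU ^ 2 + iL ^ 2 + iU ^ 2 + fL ^ 2 + fU ^ 2 := by
  simp [endpointVector, EuclideanSpace.norm_sq_eq, Fin.sum_univ_six]

end EndpointVector

lemma weightedDiceINR_eq_weightedDice (n p : ℕ) (w : Fin n → ℝ)
    (tAL tAU iAL iAU fAL fAU tBL tBU iBL iBU fBL fBU : Fin p → Fin n → ℝ) :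
    weightedDiceINR n p w tAL tAU iAL iAU fAL fAU tBL tBU iBL iBU fBL fBU =
      weightedDice w
        (fun i j ↦ endpointVector (tAL i j) (tAU i j) (iAL i j) (iAU i j) (fAL i j) (fAU i j))
        (fun i j ↦ endpointVector (tBL i j) (tBU i j) (iBL i j) (iBU i j) (fBL i j) (fBU i j)) := by
  simp only [weightedDiceINR, weightedDice, diceCoeff, inner_endpointVector,
    norm_endpointVector_sq, Fintype.expect_eq_sum_div_card, Fintype.card_fin, one_div_mul_eq_div]

theorem stmt_10
    (n p : ℕ) (hn : 1 ≤ n) (hp : 1 ≤ p)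
    (tAL tAU iAL iAU fAL fAU tBL tBU iBL iBU fBL fBU : Fin p → Fin n → ℝ)
    (hAord : ∀ i j, tAL i j ≤ tAU i j ∧ iAL i j ≤ iAU i j ∧ fAL i j ≤ fAU i j)
    (hBord : ∀ i j, tBL i j ≤ tBU i j ∧ iBL i j ≤ iBU i j ∧ fBL i j ≤ fBU i j)
    (hA : ∀ i j, tAL i j ∈ Set.Icc (0 : ℝ) 1 ∧ tAU i j ∈ Set.Icc (0 : ℝ) 1 ∧
      iAL i j ∈ Set.Icc (0 : ℝ) 1 ∧ iAU i j ∈ Set.Icc (0 : ℝ) 1 ∧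
      fAL i j ∈ Set.Icc (0 : ℝ) 1 ∧ fAU i j ∈ Set.Icc (0 : ℝ) 1)
    (hB : ∀ i j, tBL i j ∈ Set.Icc (0 : ℝ) 1 ∧ tBU i j ∈ Set.Icc (0 : ℝ) 1 ∧
      iBL i j ∈ Set.Icc (0 : ℝ) 1 ∧ iBU i j ∈ Set.Icc (0 : ℝ) 1 ∧
      fBL i j ∈ Set.Icc (0 : ℝ) 1 ∧ fBU i j ∈ Set.Icc (0 : ℝ) 1)
    (hnd : ∀ i j, ¬((tAL i j = 0 ∧ tAU i j = 0 ∧ iAL i j = 0 ∧ iAU i j = 0 ∧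
                       fAL i j = 0 ∧ fAU i j = 0) ∧
                     (tBL i j = 0 ∧ tBU i j = 0 ∧ iBL i j = 0 ∧ iBU i j = 0 ∧
                       fBL i j = 0 ∧ fBU i j = 0)))
    (w : Fin n → ℝ) (hw : ∀ j, 0 ≤ w j) (hw1 : ∑ j, w j = 1) :
    (0 ≤ weightedDiceINR n p w tAL tAU iAL iAU fAL fAU tBL tBU iBL iBU fBL fBU ∧
      weightedDiceINR n p w tAL tAU iAL iAU fAL fAU tBL tBU iBL iBU fBL fBU ≤ 1) ∧
    weightedDiceINR n p w tAL tAU iAL iAU fAL fAU tBL tBU iBL iBU fBL fBU =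
      weightedDiceINR n p w tBL tBU iBL iBU fBL fBU tAL tAU iAL iAU fAL fAU ∧
    ((∀ i j, tAL i j = tBL i j ∧ tAU i j = tBU i j ∧ iAL i j = iBL i j ∧
        iAU i j = iBU i j ∧ fAL i j = fBL i j ∧ fAU i j = fBU i j) →
      weightedDiceINR n p w tAL tAU iAL iAU fAL fAU tBL tBU iBL iBU fBL fBU = 1) := by
  have : Nonempty (Fin p) := Fin.pos_iff_nonempty.mp hp
  simp only [weightedDiceINR_eq_weightedDice, ← endpointVector_inj]
  exact stmt_10_general hw hw1
    (fun i j ↦ inner_nonneg_of_forall_nonneg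
      (fun k ↦ (forall_endpointVector_mem_iff.mpr (hA i j) k).1)
      (fun k ↦ (forall_endpointVector_mem_iff.mpr (hB i j) k).1))
    (by simpa only [endpointVector_eq_zero_iff] using hnd)
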